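/- arXiv:1411.0363 — 2 statements merged into one kernel-verified Lean document; each statement's English description precedes it below -/
import Mathlib

section
/- Let K ⊆ ℂⁿ be a compact analytic polyhedron and V a neighbourhood of K. Then there exists an open set of holomorphy X such that K ⊆ X ⊆ V. -/
open Set Metric Filter Topology

/-- A function `f`, holomorphic on the open set `U ⊆ ℂⁿ`, extends holomorphically to a point
`a`: there is a connected open neighbourhood `V` of `a` and a holomorphic `g` on `V` agreeing
with `f` on a nonempty open subset of `U ∩ V`. -/
def ExtendsHolomorphicallyTo {n : ℕ} (U : Set (Fin n → ℂ)) (f : (Fin n → ℂ) → ℂ)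
    (a : Fin n → ℂ) : Prop :=
  ∃ V : Set (Fin n → ℂ), IsOpen V ∧ IsConnected V ∧ a ∈ V ∧
    ∃ g : (Fin n → ℂ) → ℂ, DifferentiableOn ℂ g V ∧
      ∃ W : Set (Fin n → ℂ), IsOpen W ∧ W.Nonempty ∧ W ⊆ U ∩ V ∧ Set.EqOn f g W

/-- `U ⊆ ℂⁿ` is a domain of holomorphy: it is a domain (connected open set) and there exists a
holomorphic function on `U` which does not extend holomorphically to any point of `Uᶜ`. -/
def IsDomainOfHolomorphy {n : ℕ} (U : Set (Fin n → ℂ)) : Prop :=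
  IsOpen U ∧ IsConnected U ∧
    ∃ f : (Fin n → ℂ) → ℂ, DifferentiableOn ℂ f U ∧
      ∀ a ∈ Uᶜ, ¬ ExtendsHolomorphicallyTo U f a

/-!
A holomorphic function on an open set `D` that is unbounded near every frontier point, along every
local component of `D`, extends to no point outside `D`. Only countably many local components have
to be tested, and for each of them unboundedness is a generic property in the Fréchet space of
holomorphic functions as soon as one function has it. By Baire's theorem it is thus enough to find,
for each frontier point `b` separately, a holomorphic function on `D` that blows up at `b`.

For `r > 1` close to `1`, the part `X` of `{max |f_j| < r}` near `K` is contained in `V`, and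
`max |f_j| = r` on its frontier; at a frontier point `b` with `|f_j b| = r` the function
`1 / (f_j b - f_j)` blows up.
-/

open Bornology (IsBounded cobounded)
open TopologicalSpace (SeparableSpace countableBasis countable_countableBasis
  isBasis_countableBasis isOpen_of_mem_countableBasis)
open scoped Uniformity

section Components

variable {X : Type*} [TopologicalSpace X] [LocallyConnectedSpace X] {D S V : Set X} {p : X}

lemma frontier_connectedComponentIn_subset (hS : IsOpen S) :
    frontier (connectedComponentIn S p) ⊆ frontier S := by
  rw [hS.frontier_eq, hS.connectedComponentIn.frontier_eq]
  rintro b ⟨hb, hbp⟩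
  refine ⟨closure_mono (connectedComponentIn_subset S p) hb, fun hbS => hbp ?_⟩
  obtain ⟨q, hqb, hqp⟩ :=
    mem_closure_iff.1 hb _ hS.connectedComponentIn (mem_connectedComponentIn hbS)
  rw [connectedComponentIn_eq hqp, ← connectedComponentIn_eq hqb]
  exact mem_connectedComponentIn hbS

lemma exists_mem_frontier_mem_closure_connectedComponentIn_inter (hD : IsOpen D) (hV : IsOpen V)
    (hVc : IsPreconnected V) (hp : p ∈ D ∩ V) (hVD : ¬ V ⊆ D) :
    ∃ b ∈ V, b ∈ frontier D ∧ b ∈ closure (connectedComponentIn (D ∩ V) p) := by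
  have hDV : IsOpen (D ∩ V) := hD.inter hV
  set C := connectedComponentIn (D ∩ V) p
  have hCDV : C ⊆ D ∩ V := connectedComponentIn_subset _ _
  obtain ⟨b, hbC, hbV, hb⟩ : ∃ b ∈ closure C, b ∈ V ∧ b ∉ C := by
    by_contra! h
    refine hVD fun z hz => (hCDV ?_).1
    exact hVc.subset_of_closure_inter_subset hDV.connectedComponentIn
      ⟨p, hp.2, mem_connectedComponentIn hp⟩ (fun b hb => h b hb.1 hb.2) hz
  have hbDV : b ∈ frontier (D ∩ V) := by
    refine frontier_connectedComponentIn_subset hDV (p := p) ?_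
    exact hDV.connectedComponentIn.frontier_eq ▸ ⟨hbC, hb⟩
  exact ⟨b, hbV, hD.frontier_eq ▸ ⟨closure_mono (hCDV.trans inter_subset_left) hbC,
    fun hbD => (hDV.frontier_eq ▸ hbDV).2 ⟨hbD, hbV⟩⟩, hbC⟩

lemma countable_setOf_connectedComponentIn [SeparableSpace X] (hS : IsOpen S) :
    {C | ∃ p ∈ S, C = connectedComponentIn S p}.Countable := by
  refine PairwiseDisjoint.countable_of_isOpen (s := id) ?_ ?_ ?_
  · rintro _ ⟨p, -, rfl⟩ _ ⟨q, -, rfl⟩ hne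
    refine disjoint_left.2 fun z hzp hzq => hne ?_
    rw [connectedComponentIn_eq hzp, connectedComponentIn_eq hzq]
  · rintro _ ⟨p, -, rfl⟩
    exact hS.connectedComponentIn
  · rintro _ ⟨p, hp, rfl⟩
    exact ⟨p, mem_connectedComponentIn hp⟩

end Components

section BoundaryPieces

variable {X : Type*} [TopologicalSpace X] [SecondCountableTopology X] {D V W : Set X} {p b : X}

/-- The connected components of the sets `D ∩ B`, with `B` in a fixed countable basis of the
topology, that accumulate at the frontier of `D`. A holomorphic function on `D` that is unbounded
on each of them is singular at every frontier point, along every local component of `D` there. -/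
def boundaryPieces (D : Set X) : Set (Set X) :=
  {C | (∃ B ∈ countableBasis X, ∃ p ∈ D ∩ B, C = connectedComponentIn (D ∩ B) p) ∧
    (closure C ∩ frontier D).Nonempty}

lemma subset_of_mem_boundaryPieces {C : Set X} (hC : C ∈ boundaryPieces D) : C ⊆ D := by
  obtain ⟨⟨B, -, p, -, rfl⟩, -⟩ := hC
  exact (connectedComponentIn_subset _ _).trans inter_subset_left

variable [LocallyConnectedSpace X]

lemma countable_boundaryPieces (hD : IsOpen D) : (boundaryPieces D).Countable := by
  refine ((countable_countableBasis X).biUnion fun B hB =>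
    countable_setOf_connectedComponentIn
      (hD.inter (isOpen_of_mem_countableBasis hB))).mono ?_
  rintro C ⟨⟨B, hB, hC⟩, -⟩
  exact mem_biUnion hB hC

lemma exists_mem_boundaryPieces_subset (hD : IsOpen D) (hW : IsOpen W) (hbW : b ∈ W) (hWV : W ⊆ V)
    (hbD : b ∈ frontier D) (hb : b ∈ closure (connectedComponentIn (D ∩ V) p)) :
    ∃ C ∈ boundaryPieces D, C ⊆ connectedComponentIn (D ∩ V) p ∩ W := by
  obtain ⟨B, hB, hbB, hBW⟩ := (isBasis_countableBasis X).exists_subset_of_mem_open hbW hW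
  have hBo : IsOpen B := isOpen_of_mem_countableBasis hB
  -- `B` may be disconnected, and then `D ∩ B` can have components away from the frontier of `D`.
  have hbB' : b ∈ connectedComponentIn B b := mem_connectedComponentIn hbB
  have hB'B : connectedComponentIn B b ⊆ B := connectedComponentIn_subset B b
  obtain ⟨q, hqB', hqp⟩ := mem_closure_iff.1 hb _ hBo.connectedComponentIn hbB'
  have hqD : q ∈ D := (connectedComponentIn_subset _ _ hqp).1
  have hbD' : b ∉ D := (hD.frontier_eq ▸ hbD).2
  obtain ⟨b', -, hb'D, hb'⟩ := exists_mem_frontier_mem_closure_connectedComponentIn_inter hD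
    hBo.connectedComponentIn isPreconnected_connectedComponentIn ⟨hqD, hqB'⟩
    fun h => hbD' (h hbB')
  refine ⟨connectedComponentIn (D ∩ B) q, ⟨⟨B, hB, q, ⟨hqD, hB'B hqB'⟩, rfl⟩, b', ?_, hb'D⟩,
    subset_inter ?_ ?_⟩
  · exact closure_mono (connectedComponentIn_mono q (inter_subset_inter_right D hB'B)) hb'
  · rw [connectedComponentIn_eq hqp]
    exact connectedComponentIn_mono q (inter_subset_inter_right D (hBW.trans hWV))
  · exact (connectedComponentIn_subset _ _).trans (inter_subset_right.trans hBW)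

end BoundaryPieces

section Baire

variable {ι X 𝕜 E F : Type*} [NontriviallyNormedField 𝕜] [AddCommGroup E] [Module 𝕜 E]
  [TopologicalSpace E] [ContinuousAdd E] [ContinuousSMul 𝕜 E] [SeminormedAddCommGroup F]
  [NormedSpace 𝕜 F]

lemma isMeagre_setOf_isBounded_image (T : X → E →L[𝕜] F) (s : Set X)
    (h : ∃ x, ¬ IsBounded ((T · x) '' s)) : IsMeagre {x | IsBounded ((T · x) '' s)} := by
  let P : Submodule 𝕜 E :=
    { carrier := {x | ∃ M, ∀ z ∈ s, ‖T z x‖ ≤ M}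
      zero_mem' := ⟨0, fun z _ => by simp⟩
      add_mem' := fun ⟨M, hM⟩ ⟨N, hN⟩ => ⟨M + N, fun z hz => by
        simpa only [map_add] using norm_add_le_of_le (hM z hz) (hN z hz)⟩
      smul_mem' := fun c x ⟨M, hM⟩ => ⟨‖c‖ * M, fun z hz => by
        simpa only [map_smul, norm_smul] using
          mul_le_mul_of_nonneg_left (hM z hz) (norm_nonneg c)⟩ }
  have hP x : IsBounded ((T · x) '' s) ↔ x ∈ P := by
    rw [isBounded_iff_forall_norm_le]
    exact exists_congr fun M => forall_mem_image
  let A (N : ℕ) : Set E := {x | ∀ z ∈ s, ‖T z x‖ ≤ N}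
  have hAP N : A N ⊆ P := fun x hx => ⟨N, hx⟩
  have hA_closed N : IsClosed (A N) := by
    simp only [A, ofPred_forall]
    exact isClosed_biInter fun z _ => isClosed_le (T z).continuous.norm continuous_const
  have hA_interior N : interior (A N) = ∅ := by
    by_contra! hne
    have hP_top : P = ⊤ := P.eq_top_of_nonempty_interior' (hne.mono (interior_mono (hAP N)))
    obtain ⟨x, hx⟩ := h
    exact hx ((hP x).2 (hP_top ▸ Submodule.mem_top))
  have hA_meagre N : IsMeagre (A N) :=
    ((hA_closed N).isNowhereDense_iff.2 (hA_interior N)).isMeagre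
  refine (isMeagre_iUnion hA_meagre).mono fun x hx => ?_
  obtain ⟨M, hM⟩ := (hP x).1 hx
  obtain ⟨N, hN⟩ := exists_nat_ge M
  exact mem_iUnion.2 ⟨N, fun z hz => (hM z hz).trans hN⟩

theorem exists_forall_not_isBounded_image [Countable ι] [BaireSpace E] (T : X → E →L[𝕜] F)
    (s : ι → Set X) (h : ∀ i, ∃ x, ¬ IsBounded ((T · x) '' s i)) :
    ∃ x, ∀ i, ¬ IsBounded ((T · x) '' s i) := by
  by_contra! hcon
  refine not_isMeagre_of_isOpen isOpen_univ (univ_nonempty (α := E)) ?_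
  refine (isMeagre_iUnion fun i => isMeagre_setOf_isBounded_image T (s i) (h i)).mono ?_
  exact fun x _ => mem_iUnion.2 (hcon x)

end Baire

section Limits

variable {ι E F : Type*} [NormedAddCommGroup E] [NormedSpace ℂ E] [NormedAddCommGroup F]
  [NormedSpace ℂ F] {l : Filter ι} {f : ι → E → F} {g : E → F} {D : Set E} {c : E} {R : ℝ}

lemma norm_fderiv_le_of_forall_norm_le {h : E → F} {M : ℝ} (hR : 0 < R)
    (hh : DifferentiableOn ℂ h (ball c R)) (hM : ∀ z ∈ ball c R, ‖h z‖ ≤ M) :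
    ‖fderiv ℂ h c‖ ≤ 2 * M / R := by
  refine Complex.norm_fderiv_le_div_of_mapsTo_ball hh (fun z hz => ?_) hR
  rw [mem_closedBall, two_mul]
  exact (dist_le_norm_add_norm _ _).trans (add_le_add (hM z hz) (hM c (mem_ball_self hR)))

lemma uniformCauchySeqOn_fderiv (hR : 0 < R) (hf : ∀ i, DifferentiableOn ℂ (f i) (ball c (2 * R)))
    (hfl : UniformCauchySeqOn f l (ball c (2 * R))) :
    UniformCauchySeqOn (fun i => fderiv ℂ (f i)) l (ball c R) := by
  intro u hu
  obtain ⟨ε, hε, hεu⟩ := Metric.mem_uniformity_dist.1 hu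
  have hδ : 0 < ε * R / 4 := by positivity
  filter_upwards [hfl _ (Metric.dist_mem_uniformity hδ)] with i hi z hz
  have hzc : ball z R ⊆ ball c (2 * R) := ball_subset_ball' (by linarith [mem_ball.1 hz])
  have hd j : DifferentiableAt ℂ (f j) z :=
    (hf j).differentiableAt (isOpen_ball.mem_nhds (hzc (mem_ball_self hR)))
  refine hεu ?_
  calc dist (fderiv ℂ (f i.1) z) (fderiv ℂ (f i.2) z)
      = ‖fderiv ℂ (f i.1 - f i.2) z‖ := by rw [dist_eq_norm, fderiv_sub (hd _) (hd _)]
    _ ≤ 2 * (ε * R / 4) / R :=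
        norm_fderiv_le_of_forall_norm_le hR (((hf _).sub (hf _)).mono hzc) fun w hw =>
          (dist_eq_norm (f i.1 w) (f i.2 w)).symm.trans_le (hi w (hzc hw)).le
    _ < ε := by field_simp; linarith

theorem differentiableOn_of_tendstoLocallyUniformlyOn [LocallyCompactSpace E] [CompleteSpace F]
    [l.NeBot] (hD : IsOpen D) (hf : ∀ i, DifferentiableOn ℂ (f i) D)
    (hfg : TendstoLocallyUniformlyOn f g l D) : DifferentiableOn ℂ g D := by
  intro c hc
  obtain ⟨t, ht, htD, htc⟩ := local_compact_nhds (hD.mem_nhds hc)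
  have hft : TendstoUniformlyOn f g l t :=
    (tendstoLocallyUniformlyOn_iff_tendstoUniformlyOn_of_compact htc).1 (hfg.mono htD)
  obtain ⟨ρ, hρ, hρt⟩ := Metric.mem_nhds_iff.1 ht
  obtain ⟨R, hR, rfl⟩ : ∃ R > 0, ρ = 2 * R := ⟨ρ / 2, by positivity, by ring⟩
  have hfd i : DifferentiableOn ℂ (f i) (ball c (2 * R)) := (hf i).mono (hρt.trans htD)
  have hfg' : TendstoUniformlyOn f g l (ball c (2 * R)) := hft.mono hρt
  have hRR : ball c R ⊆ ball c (2 * R) := ball_subset_ball (by linarith)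
  have hf' := uniformCauchySeqOn_fderiv hR hfd hfg'.uniformCauchySeqOn
  choose! g' hg' using fun z (hz : z ∈ ball c R) =>
    cauchy_map_iff_exists_tendsto.1 (hf'.cauchy_map hz)
  have hgc : HasFDerivAt g (g' c) c := hasFDerivAt_of_tendstoUniformlyOn isOpen_ball
    (hf'.tendstoUniformlyOn_of_tendsto hg')
    (fun i z hz => ((hfd i).differentiableAt (isOpen_ball.mem_nhds (hRR hz))).hasFDerivAt)
    (fun z hz => hfg'.tendsto_at (hRR hz)) (mem_ball_self hR)
  exact hgc.differentiableAt.differentiableWithinAt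

end Limits

section IdentityTheorem

variable {E F : Type*} [NormedAddCommGroup E] [NormedSpace ℂ E] [NormedAddCommGroup F]
  [NormedSpace ℂ F] [CompleteSpace F] {f g : E → F} {D : Set E} {t : E}

lemma eqOn_of_differentiableOn_of_convex_of_eventuallyEq (hD : IsOpen D) (hDc : Convex ℝ D)
    (hf : DifferentiableOn ℂ f D) (hg : DifferentiableOn ℂ g D) (ht : t ∈ D) (hfg : f =ᶠ[𝓝 t] g) :
    EqOn f g D := by
  intro y hy
  let line (ζ : ℂ) : E := t + ζ • (y - t)
  have h0 : line 0 = t := by simp [line]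
  have h1 : line 1 = y := by simp [line]
  have hline : Differentiable ℂ line := by fun_prop
  have hΩ : IsOpen (line ⁻¹' D) := hD.preimage hline.continuous
  have hΩc : Convex ℝ (line ⁻¹' D) := (hDc.translate_preimage_right t).linear_preimage
    ((LinearMap.toSpanSingleton ℂ E (y - t)).restrictScalars ℝ)
  have han {h : E → F} (hh : DifferentiableOn ℂ h D) : AnalyticOnNhd ℂ (h ∘ line) (line ⁻¹' D) :=
    (hh.comp hline.differentiableOn fun _ => id).analyticOnNhd hΩ
  have hev : f ∘ line =ᶠ[𝓝 0] g ∘ line :=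
    (h0 ▸ hline.continuous.tendsto 0).eventually hfg
  simpa [h1] using (han hf).eqOn_of_preconnected_of_eventuallyEq (han hg) hΩc.isPreconnected
    (z₀ := 0) (by simpa [h0]) hev (by simpa [h1] : (1 : ℂ) ∈ line ⁻¹' D)

theorem eqOn_of_differentiableOn_of_preconnected_of_eventuallyEq (hD : IsOpen D)
    (hDc : IsPreconnected D) (hf : DifferentiableOn ℂ f D) (hg : DifferentiableOn ℂ g D)
    (ht : t ∈ D) (hfg : f =ᶠ[𝓝 t] g) : EqOn f g D := by
  suffices h : D ⊆ {z | f =ᶠ[𝓝 z] g} from fun z hz => (h hz).eq_of_nhds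
  refine hDc.subset_of_closure_inter_subset isOpen_setOfPred_eventually_nhds ⟨t, ht, hfg⟩ ?_
  rintro z ⟨hz, hzD⟩
  obtain ⟨ε, hε, hball⟩ := Metric.isOpen_iff.1 hD z hzD
  obtain ⟨s, hs, hsz⟩ := mem_closure_iff.1 hz _ isOpen_ball (mem_ball_self hε)
  filter_upwards [ball_mem_nhds z hε]
  exact eqOn_of_differentiableOn_of_convex_of_eventuallyEq isOpen_ball (convex_ball z ε)
    (hf.mono hball) (hg.mono hball) hs hsz

end IdentityTheorem

section HolomorphicMaps

variable {E F : Type*} [NormedAddCommGroup E] [NormedSpace ℂ E] [NormedAddCommGroup F]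
  [NormedSpace ℂ F] {D : Set E}

/-- The space of holomorphic maps on `D`, as a submodule of `C(D, F)` so that it carries the
topology of locally uniform convergence. A member is a continuous map on the subtype `D` that is
the restriction of a map `E → F` holomorphic on `D`. -/
def holomorphicMaps (F : Type*) [NormedAddCommGroup F] [NormedSpace ℂ F] (D : Set E) :
    Submodule ℂ C(D, F) where
  carrier := {φ | ∃ f, DifferentiableOn ℂ f D ∧ D.domRestrict f = φ}
  zero_mem' := ⟨0, differentiableOn_const 0, rfl⟩
  add_mem' := fun ⟨f, hf, hfφ⟩ ⟨g, hg, hgψ⟩ => ⟨f + g, hf.add hg, congrArg₂ (· + ·) hfφ hgψ⟩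
  smul_mem' := fun c _ ⟨f, hf, hfφ⟩ => ⟨c • f, hf.const_smul c, congrArg (c • ·) hfφ⟩

lemma isClosed_holomorphicMaps [LocallyCompactSpace E] [CompleteSpace F] (hD : IsOpen D) :
    IsClosed (holomorphicMaps F D : Set C(D, F)) := by
  refine closure_subset_iff_isClosed.1 fun φ hφ => ?_
  have : LocallyCompactSpace D := hD.locallyCompactSpace
  let l : Filter (holomorphicMaps F D) := comap (↑) (𝓝 φ)
  have : l.NeBot := mem_closure_iff_comap_neBot.1 hφ
  choose f hf hfψ using fun ψ : holomorphicMaps F D => ψ.2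
  let g : E → F := Function.extend (↑) φ 0
  have hgφ : D.domRestrict g = φ := Function.extend_comp Subtype.val_injective φ 0
  refine ⟨g, differentiableOn_of_tendstoLocallyUniformlyOn (l := l) hD hf ?_, hgφ⟩
  have hfg : TendstoLocallyUniformly (fun ψ => D.domRestrict (f ψ)) (D.domRestrict g) l := by
    simpa only [hfψ, hgφ] using ContinuousMap.tendsto_iff_tendstoLocallyUniformly.1 tendsto_comap
  exact tendstoLocallyUniformlyOn_iff_tendstoLocallyUniformly_comp_coe.2 hfg

lemma baireSpace_holomorphicMaps [ProperSpace E] [CompleteSpace F] (hD : IsOpen D) :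
    BaireSpace (holomorphicMaps F D) := by
  have : LocallyCompactSpace D := hD.locallyCompactSpace
  have : CompleteSpace (holomorphicMaps F D) := (isClosed_holomorphicMaps hD).completeSpace_coe
  have : (𝓤 (holomorphicMaps F D)).IsCountablyGenerated :=
    comap.isCountablyGenerated (𝓤 C(D, F)) _
  let _ : PseudoMetricSpace (holomorphicMaps F D) := UniformSpace.pseudoMetricSpace _
  infer_instance

theorem exists_differentiableOn_forall_not_isBounded_image [ProperSpace E] [CompleteSpace F]
    (hD : IsOpen D) {𝒞 : Set (Set E)} (h𝒞 : 𝒞.Countable) (h𝒞D : ∀ C ∈ 𝒞, C ⊆ D)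
    (h : ∀ C ∈ 𝒞, ∃ f : E → F, DifferentiableOn ℂ f D ∧ ¬ IsBounded (f '' C)) :
    ∃ f : E → F, DifferentiableOn ℂ f D ∧ ∀ C ∈ 𝒞, ¬ IsBounded (f '' C) := by
  have : Countable 𝒞 := h𝒞
  have : BaireSpace (holomorphicMaps F D) := baireSpace_holomorphicMaps hD
  let eval (z : D) : holomorphicMaps F D →L[ℂ] F :=
    (ContinuousMap.evalCLM ℂ z).comp (holomorphicMaps F D).subtypeL
  have eval_image {f : E → F} {φ : holomorphicMaps F D} (hfφ : D.domRestrict f = φ.1) {C : Set E}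
      (hC : C ∈ 𝒞) : (eval · φ) '' ((↑) ⁻¹' C) = f '' C := by
    change φ.1 '' _ = _
    rw [← hfφ, image_domRestrict, inter_eq_left.2 (h𝒞D C hC)]
  obtain ⟨φ, hφ⟩ :=
      exists_forall_not_isBounded_image eval (fun C : 𝒞 => (↑) ⁻¹' C.1) fun ⟨C, hC⟩ => by
    obtain ⟨f, hf, hfC⟩ := h C hC
    refine ⟨⟨⟨D.domRestrict f, hf.continuousOn.domRestrict⟩, f, hf, rfl⟩, ?_⟩
    rwa [eval_image rfl hC]
  obtain ⟨f, hf, hfφ⟩ := φ.2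
  exact ⟨f, hf, fun C hC => eval_image hfφ hC ▸ hφ ⟨C, hC⟩⟩

end HolomorphicMaps

section DomainsOfHolomorphy

lemma not_isBounded_image_of_tendsto_cobounded {X Y : Type*} [TopologicalSpace X] [Bornology Y]
    {f : X → Y} {s : Set X} {b : X} (hb : b ∈ closure s)
    (hf : Tendsto f (𝓝[s] b) (cobounded Y)) : ¬ IsBounded (f '' s) := by
  intro hfs
  have : (𝓝[s] b).NeBot := mem_closure_iff_nhdsWithin_neBot.1 hb
  obtain ⟨z, hz, hzs⟩ := ((hf.eventually hfs).and self_mem_nhdsWithin).exists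
  exact hz (mem_image_of_mem f hzs)

lemma tendsto_inv_sub_cobounded {X 𝕜 : Type*} [TopologicalSpace X] [NormedDivisionRing 𝕜]
    {f : X → 𝕜} {s : Set X} {b : X} (hf : ContinuousWithinAt f s b) (hb : f b ∉ f '' s) :
    Tendsto (fun z => (f b - f z)⁻¹) (𝓝[s] b) (cobounded 𝕜) := by
  refine tendsto_inv₀_nhdsNE_zero.comp (tendsto_nhdsWithin_iff.2 ⟨?_, ?_⟩)
  · simpa only [sub_self] using hf.const_sub (f b)
  · filter_upwards [self_mem_nhdsWithin] with z hz
    exact sub_ne_zero.2 fun h => hb ⟨z, hz, h.symm⟩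

lemma exists_mem_boundaryPieces_isBounded_image_of_eventuallyEq {E F : Type*}
    [NormedAddCommGroup E] [NormedSpace ℂ E] [SecondCountableTopology E] [NormedAddCommGroup F]
    [NormedSpace ℂ F] [CompleteSpace F] {f g : E → F} {D V : Set E} {p : E} (hD : IsOpen D)
    (hV : IsOpen V) (hVc : IsPreconnected V) (hVD : ¬ V ⊆ D) (hf : DifferentiableOn ℂ f D)
    (hg : DifferentiableOn ℂ g V) (hp : p ∈ D ∩ V) (hfg : f =ᶠ[𝓝 p] g) :
    ∃ C ∈ boundaryPieces D, IsBounded (f '' C) := by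
  have hC₀ : connectedComponentIn (D ∩ V) p ⊆ D ∩ V := connectedComponentIn_subset _ _
  have hfg' : EqOn f g (connectedComponentIn (D ∩ V) p) :=
    eqOn_of_differentiableOn_of_preconnected_of_eventuallyEq (hD.inter hV).connectedComponentIn
      isPreconnected_connectedComponentIn (hf.mono (hC₀.trans inter_subset_left))
      (hg.mono (hC₀.trans inter_subset_right)) (mem_connectedComponentIn hp) hfg
  obtain ⟨b, hbV, hbD, hb⟩ :=
    exists_mem_frontier_mem_closure_connectedComponentIn_inter hD hV hVc hp hVD
  obtain ⟨s, hs, hgs⟩ := Metric.exists_isBounded_image_of_tendsto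
    (hg.differentiableAt (hV.mem_nhds hbV)).continuousAt
  obtain ⟨W, hWs, hW, hbW⟩ := _root_.mem_nhds_iff.1 (inter_mem hs (hV.mem_nhds hbV))
  obtain ⟨C, hC, hCW⟩ := exists_mem_boundaryPieces_subset hD hW hbW
    (hWs.trans inter_subset_right) hbD hb
  refine ⟨C, hC, hgs.subset ?_⟩
  rw [image_congr fun z hz => hfg' (hCW hz).1]
  exact image_mono fun z hz => (hWs (hCW hz).2).1

variable {n : ℕ} {D : Set (Fin n → ℂ)}

theorem isDomainOfHolomorphy_of_forall_tendsto_cobounded (hD : IsOpen D) (hDc : IsConnected D)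
    (h : ∀ b ∈ frontier D, ∃ f : (Fin n → ℂ) → ℂ, DifferentiableOn ℂ f D ∧
      Tendsto f (𝓝[D] b) (cobounded ℂ)) : IsDomainOfHolomorphy D := by
  obtain ⟨f, hf, hfD⟩ : ∃ f : (Fin n → ℂ) → ℂ, DifferentiableOn ℂ f D ∧
      ∀ C ∈ boundaryPieces D, ¬ IsBounded (f '' C) := by
    refine exists_differentiableOn_forall_not_isBounded_image hD (countable_boundaryPieces hD)
      (fun _ => subset_of_mem_boundaryPieces) fun C hC => ?_
    obtain ⟨b, hbC, hbD⟩ := hC.2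
    obtain ⟨f, hf, hfb⟩ := h b hbD
    exact ⟨f, hf, not_isBounded_image_of_tendsto_cobounded hbC
      (hfb.mono_left (nhdsWithin_mono b (subset_of_mem_boundaryPieces hC)))⟩
  refine ⟨hD, hDc, f, hf, ?_⟩
  rintro a ha ⟨V, hV, hVc, haV, g, hg, W, hW, ⟨p, hp⟩, hWDV, hfg⟩
  obtain ⟨C, hC, hfC⟩ := exists_mem_boundaryPieces_isBounded_image_of_eventuallyEq hD hV
    hVc.isPreconnected (fun hVD => ha (hVD haV)) hf hg (hWDV hp)
    (hfg.eventuallyEq_of_mem (hW.mem_nhds hp))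
  exact hfD C hC hfC

theorem isDomainOfHolomorphy_of_forall_notMem_image (hD : IsOpen D) (hDc : IsConnected D)
    (h : ∀ b ∈ frontier D, ∃ f : (Fin n → ℂ) → ℂ, DifferentiableOn ℂ f D ∧
      ContinuousWithinAt f D b ∧ f b ∉ f '' D) : IsDomainOfHolomorphy D := by
  refine isDomainOfHolomorphy_of_forall_tendsto_cobounded hD hDc fun b hb => ?_
  obtain ⟨f, hf, hfc, hfb⟩ := h b hb
  refine ⟨fun z => (f b - f z)⁻¹, (hf.const_sub (f b)).inv fun z hz => ?_,
    tendsto_inv_sub_cobounded hfc hfb⟩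
  exact sub_ne_zero.2 fun hz' => hfb ⟨z, hz, hz'.symm⟩

end DomainsOfHolomorphy

section Sublevel

lemma exists_isOpen_between_eqOn_frontier {X : Type*} [TopologicalSpace X] [LocallyCompactSpace X]
    [RegularSpace X] {U V : Set X} {φ : X → ℝ} {a : ℝ} (hU : IsOpen U) (hφ : ContinuousOn φ U)
    (hK : IsCompact {z ∈ U | φ z ≤ a}) (hV : IsOpen V) (hKV : {z ∈ U | φ z ≤ a} ⊆ V) :
    ∃ r > a, ∃ W, IsOpen W ∧ {z ∈ U | φ z ≤ a} ⊆ W ∧ W ⊆ V ∧ closure W ⊆ U ∧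
      (∀ z ∈ W, φ z < r) ∧ ∀ z ∈ frontier W, φ z = r := by
  obtain ⟨L, hL, hKL, hLUV, hLc⟩ := exists_open_between_and_isCompact_closure hK
    (hU.inter hV) (subset_inter (sep_subset _ _) hKV)
  have hLU : closure L ⊆ U := hLUV.trans inter_subset_left
  have hφL : ContinuousOn φ (closure L) := hφ.mono hLU
  obtain ⟨r, har, hr⟩ : ∃ r > a, ∀ z ∈ frontier L, r ≤ φ z := by
    refine (hLc.of_isClosed_subset isClosed_frontier frontier_subset_closure).exists_forall_le'
      (hφL.mono frontier_subset_closure) fun z hz => ?_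
    by_contra! hza
    exact (hL.frontier_eq ▸ hz).2 (hKL ⟨hLU hz.1, hza⟩)
  have hWL : closure (L ∩ φ ⁻¹' Iio r) ⊆ closure L := closure_mono inter_subset_left
  have hW : IsOpen (L ∩ φ ⁻¹' Iio r) :=
    (hφL.mono subset_closure).isOpen_inter_preimage hL isOpen_Iio
  refine ⟨r, har, L ∩ φ ⁻¹' Iio r, hW, fun z hz => ⟨hKL hz, hz.2.trans_lt har⟩,
    fun z hz => (hLUV (subset_closure hz.1)).2, hWL.trans hLU, fun z hz => hz.2,
    fun z hz => le_antisymm ?_ ?_⟩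
  · exact le_on_closure (fun w hw => (mem_Iio.1 hw.2).le) (hφL.mono hWL) continuousOn_const hz.1
  · by_contra! hzr
    have hzL : z ∉ L := fun hzL => hz.2 (hW.interior_eq.symm ▸ ⟨hzL, hzr⟩)
    exact hzr.not_ge (hr z (hL.frontier_eq ▸ ⟨hWL hz.1, hzL⟩))

end Sublevel

/-- Let `K = {z ∈ U : |f_j z| ≤ 1, 1 ≤ j ≤ m}` be a compact analytic polyhedron and `V` an open
neighbourhood of `K`.  Then there is an open set of holomorphy `X` (an open set all of whose
connected components are domains of holomorphy) with `K ⊆ X ⊆ V`. -/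
theorem compact_analytic_polyhedron_approx {n m : ℕ} (U : Set (Fin n → ℂ)) (hU : IsOpen U)
    (f : Fin m → (Fin n → ℂ) → ℂ) (hf : ∀ j, DifferentiableOn ℂ (f j) U)
    (K : Set (Fin n → ℂ)) (hK : K = {z ∈ U | ∀ j, ‖f j z‖ ≤ 1}) (hKc : IsCompact K)
    (V : Set (Fin n → ℂ)) (hV : IsOpen V) (hKV : K ⊆ V) :
    ∃ X : Set (Fin n → ℂ), IsOpen X ∧ K ⊆ X ∧ X ⊆ V ∧
      ∀ x ∈ X, IsDomainOfHolomorphy (connectedComponentIn X x) := by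
  let F (z : Fin n → ℂ) : Fin m → ℂ := fun j => f j z
  have hF : ContinuousOn (fun z => ‖F z‖) U :=
    (continuousOn_pi.2 fun j => (hf j).continuousOn).norm
  obtain rfl : K = {z ∈ U | ‖F z‖ ≤ 1} := by
    simpa only [F, pi_norm_le_iff_of_nonneg zero_le_one] using hK
  obtain ⟨r, hr, X, hX, hKX, hXV, hXU, hFX, hFr⟩ :=
    exists_isOpen_between_eqOn_frontier hU hF hKc hV hKV
  refine ⟨X, hX, hKX, hXV, fun x hx => ?_⟩
  have hDX : connectedComponentIn X x ⊆ X := connectedComponentIn_subset X x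
  have hDU : connectedComponentIn X x ⊆ U := hDX.trans (subset_closure.trans hXU)
  refine isDomainOfHolomorphy_of_forall_notMem_image hX.connectedComponentIn
    (isConnected_connectedComponentIn_iff.2 hx) fun b hb => ?_
  have hbX : b ∈ frontier X := frontier_connectedComponentIn_subset hX hb
  obtain ⟨j, hj⟩ : ∃ j, r ≤ ‖f j b‖ := by
    by_contra! h
    exact ((pi_norm_lt_iff (zero_lt_one.trans hr)).2 h).ne (hFr b hbX)
  refine ⟨f j, (hf j).mono hDU, ((hf j).continuousOn b (hXU hbX.1)).mono hDU, ?_⟩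
  rintro ⟨z, hz, hzb⟩
  exact (hj.trans (hzb ▸ norm_le_pi_norm (F z) j)).not_gt (hFX z (hDX hz))
end

section
/- Let {K_j}_{j≥1} be a sequence of compact sets in ℂⁿ such that K_j ⊆ int K_{j+1} and K_j is Runge in K_{j+1} for all j ≥ 1. Then K₁ is Runge in U := ⋃_{j≥1} int K_j. -/
open Set Metric Filter Topology

/-- `A` is Runge in `B`: every function holomorphic on a neighbourhood of `A` can be approximated
uniformly on each compact subset of `A`, to within any `ε > 0`, by functions holomorphic on a
neighbourhood of `B`. -/
def RungeIn {n : ℕ} (A B : Set (Fin n → ℂ)) : Prop :=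
  ∀ f : (Fin n → ℂ) → ℂ,
    (∃ W : Set (Fin n → ℂ), IsOpen W ∧ A ⊆ W ∧ DifferentiableOn ℂ f W) →
    ∀ K : Set (Fin n → ℂ), K ⊆ A → IsCompact K → ∀ ε : ℝ, 0 < ε →
      ∃ g : (Fin n → ℂ) → ℂ,
        (∃ W' : Set (Fin n → ℂ), IsOpen W' ∧ B ⊆ W' ∧ DifferentiableOn ℂ g W') ∧
        ∀ z ∈ K, ‖f z - g z‖ < ε

/-!
Starting from a function `f` holomorphic near the first set, use the Runge property to choose
successively `F 0 = f`, `F 1`, `F 2`, … with `F j` holomorphic near `K j` and `F (j + 1)`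
geometrically close to `F j` on a compact part `C j` of `K j`. When the `C j` exhaust the union of
the interiors, the `F j` converge uniformly on each `C j`; since Cauchy's estimate turns uniform
convergence into uniform convergence of derivatives, the limit is holomorphic, and the total error
is at most the sum of the geometric series.
-/

section UniformLimits

variable {ι E G : Type*} [NormedAddCommGroup E] [NormedSpace ℂ E] [NormedAddCommGroup G]
  [NormedSpace ℂ G] {φ : Filter ι} {F : ι → E → G}

lemma norm_fderiv_le_of_forall_mem_ball_norm_le {f : E → G} {c : E} {R M : ℝ} (hR : 0 < R)
    (hf : DifferentiableOn ℂ f (ball c R)) (hM : ∀ z ∈ ball c R, ‖f z‖ ≤ M) :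
    ‖fderiv ℂ f c‖ ≤ 2 * M / R := by
  refine Complex.norm_fderiv_le_div_of_mapsTo_ball hf (fun z hz => ?_) hR
  calc dist (f z) (f c) ≤ ‖f z‖ + ‖f c‖ := dist_le_norm_add_norm _ _
    _ ≤ M + M := add_le_add (hM z hz) (hM c (mem_ball_self hR))
    _ = 2 * M := (two_mul M).symm

lemma uniformCauchySeqOn_fderiv_of_thickening {S : Set E} {δ : ℝ} (hδ : 0 < δ)
    (hF : UniformCauchySeqOn F φ (thickening δ S))
    (hd : ∀ᶠ n in φ, DifferentiableOn ℂ (F n) (thickening δ S)) :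
    UniformCauchySeqOn (fun n => fderiv ℂ (F n)) φ S := by
  intro u hu
  obtain ⟨ε, hε, hεu⟩ := mem_uniformity_dist.1 hu
  have hclose := hF _ (dist_mem_uniformity (show 0 < ε * δ / 4 by positivity))
  filter_upwards [hclose, hd.prod_mk hd] with ⟨m, n⟩ hmn ⟨hm, hn⟩ x hx
  have hball : ball x δ ⊆ thickening δ S := ball_subset_thickening hx δ
  have hdiffAt : ∀ {k}, DifferentiableOn ℂ (F k) (thickening δ S) → DifferentiableAt ℂ (F k) x :=
    fun hk => hk.differentiableAt (mem_of_superset (ball_mem_nhds x hδ) hball)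
  apply hεu
  calc dist (fderiv ℂ (F m) x) (fderiv ℂ (F n) x)
      = ‖fderiv ℂ (F m - F n) x‖ := by
        rw [dist_eq_norm, fderiv_sub (hdiffAt hm) (hdiffAt hn)]
    _ ≤ 2 * (ε * δ / 4) / δ :=
        norm_fderiv_le_of_forall_mem_ball_norm_le hδ ((hm.sub hn).mono hball) fun z hz => by
          simpa only [Pi.sub_apply, dist_eq_norm] using (hmn z (hball hz)).le
    _ = ε / 2 := by field
    _ < ε := half_lt_self hε

theorem differentiableOn_of_tendstoUniformlyOn [CompleteSpace G] [φ.NeBot] {f : E → G} {U : Set E}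
    (hU : IsOpen U) (hF : TendstoUniformlyOn F f φ U)
    (hd : ∀ᶠ n in φ, DifferentiableOn ℂ (F n) U) : DifferentiableOn ℂ f U := by
  intro x hx
  obtain ⟨r, hr, hrU⟩ := Metric.isOpen_iff.1 hU x hx
  have hthick : thickening (r / 2) (ball x (r / 2)) ⊆ U :=
    (thickening_ball x _ _).trans (by rwa [add_halves])
  have hcauchy : UniformCauchySeqOn (fun n => fderiv ℂ (F n)) φ (ball x (r / 2)) :=
    uniformCauchySeqOn_fderiv_of_thickening (half_pos hr) (hF.uniformCauchySeqOn.mono hthick)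
      (hd.mono fun _ h => h.mono hthick)
  choose! f' hf' using fun y (hy : y ∈ ball x (r / 2)) =>
    CompleteSpace.complete (hcauchy.cauchy_map hy)
  have hderiv : TendstoUniformlyOn (fun n => fderiv ℂ (F n)) f' φ (ball x (r / 2)) :=
    hcauchy.tendstoUniformlyOn_of_tendsto hf'
  have hlim : HasFDerivAt f (f' x) x := by
    refine hasFDerivAt_of_tendstoUniformlyOnFilter
      (hderiv.tendstoUniformlyOnFilter.mono_right
        (le_principal_iff.2 (ball_mem_nhds x (half_pos hr)))) ?_
      (eventually_of_mem (hU.mem_nhds hx) fun y hy => hF.tendsto_at hy)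
    filter_upwards [hd.prod_mk (hU.mem_nhds hx)] with ⟨n, y⟩ ⟨hn, hy⟩
    exact (hn.differentiableAt (hU.mem_nhds hy)).hasFDerivAt
  exact hlim.differentiableAt.differentiableWithinAt

lemma differentiableOn_iUnion_interior_of_tendstoUniformlyOn [CompleteSpace G] {F : ℕ → E → G}
    {f : E → G} {C : ℕ → Set E} (hC : Monotone C) (hd : ∀ j, DifferentiableOn ℂ (F j) (C j))
    (hlim : ∀ j, TendstoUniformlyOn F f atTop (C j)) :
    DifferentiableOn ℂ f (⋃ j, interior (C j)) := by
  refine DifferentiableOn.iUnion_of_isOpen (fun j => ?_) fun _ => isOpen_interior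
  refine differentiableOn_of_tendstoUniformlyOn isOpen_interior ((hlim j).mono interior_subset) ?_
  filter_upwards [eventually_ge_atTop j] with i hji
  exact (hd i).mono (interior_subset.trans (hC hji))

end UniformLimits

lemma tendstoUniformlyOn_add_tsum_sub {α G : Type*} [NormedAddCommGroup G] [CompleteSpace G]
    {F : ℕ → α → G} {u : ℕ → ℝ} {s : Set α} (hu : Summable u)
    (hF : ∀ᶠ n in atTop, ∀ x ∈ s, ‖F (n + 1) x - F n x‖ ≤ u n) :
    TendstoUniformlyOn F (fun x => F 0 x + ∑' n, (F (n + 1) x - F n x)) atTop s := by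
  have hsum := tendstoUniformlyOn_tsum_nat_eventually hu hF
  rw [Metric.tendstoUniformlyOn_iff] at hsum ⊢
  intro ε hε
  filter_upwards [hsum ε hε] with n hn x hx
  rw [← add_sub_cancel (F 0 x) (F n x), ← Finset.sum_range_sub (fun i => F i x), dist_add_left]
  exact hn x hx

lemma exists_monotone_isCompact_iUnion_interior_eq {X : Type*} [PseudoEMetricSpace X]
    [WeaklyLocallyCompactSpace X] [SigmaCompactSpace X] {K : ℕ → Set X} (hK : Monotone K) :
    ∃ C : ℕ → Set X, Monotone C ∧ (∀ j, IsCompact (C j)) ∧ (∀ j, C j ⊆ K j) ∧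
      ⋃ j, interior (C j) = ⋃ j, interior (K j) := by
  let B : CompactExhaustion X := default
  let C : ℕ → Set X := fun j => B j ∩ {x | (j : ENNReal)⁻¹ ≤ infEDist x (K j)ᶜ}
  have hCK : ∀ j, C j ⊆ K j := by
    rintro j x ⟨-, hx⟩
    by_contra hxK
    rw [mem_ofPred_eq, infEDist_zero_of_mem hxK, nonpos_iff_eq_zero, ENNReal.inv_eq_zero] at hx
    exact ENNReal.natCast_ne_top j hx
  refine ⟨C, fun i j hij => ?_, fun j => ?_, hCK, Subset.antisymm ?_ ?_⟩
  · refine inter_subset_inter (B.subset hij) fun x hx => ?_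
    calc (j : ENNReal)⁻¹ ≤ (i : ENNReal)⁻¹ := ENNReal.inv_le_inv.2 (Nat.cast_le.2 hij)
      _ ≤ infEDist x (K i)ᶜ := hx
      _ ≤ infEDist x (K j)ᶜ := infEDist_anti (compl_subset_compl.2 (hK hij))
  · exact (B.isCompact j).inter_right (isClosed_le continuous_const continuous_infEDist)
  · exact iUnion_mono fun j => interior_mono (hCK j)
  · refine iUnion_subset fun i x hx => ?_
    obtain ⟨k, hk⟩ := B.exists_mem_nhds x
    have hpos : 0 < infEDist x (K i)ᶜ := by
      rwa [infEDist_pos_iff_notMem_closure, closure_compl, notMem_compl_iff]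
    obtain ⟨j, hj, hkj, hij⟩ :=
      ((ENNReal.tendsto_inv_nat_nhds_zero.eventually (gt_mem_nhds hpos)).and
        ((eventually_ge_atTop k).and (eventually_ge_atTop i))).exists
    have hdist : (j : ENNReal)⁻¹ < infEDist x (K j)ᶜ :=
      hj.trans_le (infEDist_anti (compl_subset_compl.2 (hK hij)))
    refine mem_iUnion.2 ⟨j, mem_interior_iff_mem_nhds.2 (inter_mem ?_ ?_)⟩
    · exact mem_of_superset hk (B.subset hkj)
    · exact (continuous_infEDist.continuousAt.eventually (lt_mem_nhds hdist)).mono fun _ => le_of_lt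

section Holomorphic

variable {E G : Type*} [NormedAddCommGroup E] [NormedSpace ℂ E] [NormedAddCommGroup G]
  [NormedSpace ℂ G]

/-- `f` is holomorphic on the arbitrary set `A`, i.e. complex differentiable on some open
neighbourhood of `A`; this is the regularity appearing in `RungeIn`. -/
def HolomorphicNear (f : E → G) (A : Set E) : Prop :=
  ∃ W : Set E, IsOpen W ∧ A ⊆ W ∧ DifferentiableOn ℂ f W

lemma HolomorphicNear.differentiableOn {f : E → G} {A : Set E} (hf : HolomorphicNear f A) :
    DifferentiableOn ℂ f A := by
  obtain ⟨W, -, hAW, hW⟩ := hf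
  exact hW.mono hAW

end Holomorphic

section Runge

variable {n : ℕ} {K : ℕ → Set (Fin n → ℂ)}

lemma exists_seq_holomorphicNear_norm_sub_lt (hrunge : ∀ j, RungeIn (K j) (K (j + 1)))
    {C : ℕ → Set (Fin n → ℂ)} (hC : ∀ j, IsCompact (C j)) (hCK : ∀ j, C j ⊆ K j) {u : ℕ → ℝ}
    (hu : ∀ j, 0 < u j) {f : (Fin n → ℂ) → ℂ} (hf : HolomorphicNear f (K 0)) :
    ∃ F : ℕ → (Fin n → ℂ) → ℂ, F 0 = f ∧ (∀ j, HolomorphicNear (F j) (K j)) ∧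
      ∀ j, ∀ z ∈ C j, ‖F j z - F (j + 1) z‖ < u j := by
  have hstep : ∀ j h, HolomorphicNear h (K j) →
      ∃ g, HolomorphicNear g (K (j + 1)) ∧ ∀ z ∈ C j, ‖h z - g z‖ < u j :=
    fun j h hh => hrunge j h hh (C j) (hCK j) (hC j) (u j) (hu j)
  choose! approx happrox hclose using hstep
  let F : ℕ → (Fin n → ℂ) → ℂ := fun j => Nat.rec f approx j
  have hF : ∀ j, HolomorphicNear (F j) (K j) := by
    intro j
    induction j with
    | zero => exact hf
    | succ j ih => exact happrox j (F j) ih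
  exact ⟨F, rfl, hF, fun j => hclose j (F j) (hF j)⟩

theorem runge_in_union_general (hmono : Monotone K) (hsub : K 0 ⊆ ⋃ j, interior (K j))
    (hrunge : ∀ j, RungeIn (K j) (K (j + 1))) : RungeIn (K 0) (⋃ j, interior (K j)) := by
  intro f hf L hLK hL ε hε
  obtain ⟨C, hCmono, hCcpt, hCK, hCU⟩ := exists_monotone_isCompact_iUnion_interior_eq hmono
  let u : ℕ → ℝ := fun j => ε / 2 / 2 / 2 ^ j
  have hu : Summable u := summable_geometric_two' (ε / 2)
  obtain ⟨F, rfl, hFhol, hFclose⟩ := exists_seq_holomorphicNear_norm_sub_lt (u := u) hrunge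
    (fun j => (hCcpt j).union hL)
    (fun j => union_subset (hCK j) (hLK.trans (hmono j.zero_le))) (fun j => by positivity) hf
  let g : (Fin n → ℂ) → ℂ := fun z => F 0 z + ∑' i, (F (i + 1) z - F i z)
  have hlim : ∀ j, TendstoUniformlyOn F g atTop (C j) :=
    fun j => tendstoUniformlyOn_add_tsum_sub hu <| (eventually_ge_atTop j).mono fun i hji z hz => by
      simpa only [norm_sub_rev] using (hFclose i z (.inl (hCmono hji hz))).le
  have hg : DifferentiableOn ℂ g (⋃ j, interior (C j)) :=
    differentiableOn_iUnion_interior_of_tendstoUniformlyOn hCmono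
      (fun j => (hFhol j).differentiableOn.mono (hCK j)) hlim
  refine ⟨g, ⟨_, isOpen_iUnion fun _ => isOpen_interior, hCU.ge, hg⟩, fun z hz => ?_⟩
  obtain ⟨j, hj⟩ := mem_iUnion.1 (hCU.ge (hsub (hLK hz)))
  rw [← dist_eq_norm]
  calc dist (F 0 z) (g z) ≤ ∑' i, u i :=
        dist_le_tsum_of_dist_le_of_tendsto₀ u
          (fun i => (dist_eq_norm _ _).trans_le (hFclose i z (.inr hz)).le) hu
          ((hlim j).tendsto_at (interior_subset hj))
    _ = ε / 2 := tsum_geometric_two' (ε / 2)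
    _ < ε := half_lt_self hε

end Runge

/-- If `{K_j}_{j ≥ 1}` is a sequence of compact sets in `ℂⁿ` with `K_j ⊆ int K_{j+1}` and `K_j`
Runge in `K_{j+1}` for all `j ≥ 1`, then `K₁` is Runge in `⋃_{j ≥ 1} int K_j`. -/
theorem runge_in_union {n : ℕ} (K : ℕ → Set (Fin n → ℂ))
    (hcpt : ∀ j, 1 ≤ j → IsCompact (K j))
    (hsub : ∀ j, 1 ≤ j → K j ⊆ interior (K (j + 1)))
    (hrunge : ∀ j, 1 ≤ j → RungeIn (K j) (K (j + 1))) :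
    RungeIn (K 1) (⋃ j, ⋃ (_ : 1 ≤ j), interior (K j)) := by
  have hshift : ⋃ j, ⋃ (_ : 1 ≤ j), interior (K j) = ⋃ j, interior (K (j + 1)) :=
    iUnion_ge_eq_iUnion_nat_add (fun j => interior (K j)) 1
  rw [hshift]
  exact runge_in_union_general
    (monotone_nat_of_le_succ fun j => (hsub (j + 1) j.succ_pos).trans interior_subset)
    ((hsub 1 le_rfl).trans (subset_iUnion (fun j => interior (K (j + 1))) 1))
    fun j => hrunge (j + 1) j.succ_pos
end
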